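/- For all integers n ≥ 1, C_{2,2}(n) = (1/n) · ∑_{i=0}^{⌊(n−1)/3⌋} multinomial(2(n−1−i); n−1, n−1−3i, i) · (−1)^i · 2^{n−1−3i}, where multinomial(m; a,b,c) = m!/(a!·b!·c!) for m = a+b+c. -/

import Mathlib

open PowerSeries in
lemma aux_res (y v : PowerSeries ℚ) (hy : constantCoeff y = 0) (h : y * v = X) (k : ℕ) :
    coeff k (v^(k+1) * derivative ℚ y) = if k = 0 then 1 else 0 := by
  have hd : y * derivative ℚ v + v * derivative ℚ y = 1 := by
    have := congrArg (derivative ℚ) h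
    simpa [Derivation.leibniz] using this
  rcases k with _ | k
  · have h0 : constantCoeff v * constantCoeff (derivative ℚ y) = 1 - constantCoeff y * constantCoeff (derivative ℚ v) := by
      have := congrArg (constantCoeff (R := ℚ)) hd
      simp only [map_add, map_mul, map_one] at this
      linarith
    rw [if_pos rfl, zero_add, pow_one, coeff_zero_eq_constantCoeff_apply, map_mul, h0, hy]; ring
  · have key : ((k+1 : ℕ) : PowerSeries ℚ) * (v^(k+1+1) * derivative ℚ y)
        = ((k+1 : ℕ) : PowerSeries ℚ) * v^(k+1) - X * derivative ℚ (v^(k+1)) := by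
      rw [Derivation.leibniz_pow, ← h]
      simp only [Nat.add_sub_cancel, smul_eq_mul, nsmul_eq_mul]
      linear_combination ((k+1 : ℕ) : PowerSeries ℚ) * v^(k+1) * hd
    have := congrArg (coeff (R := ℚ) (k+1)) key
    rw [map_sub, coeff_succ_X_mul, coeff_derivative, ← map_natCast (C (R := ℚ)), coeff_C_mul, coeff_C_mul] at this
    have h3 : ((k+1:ℕ):ℚ) ≠ 0 := by positivity
    simp only [Nat.add_eq_zero_iff, one_ne_zero, and_false, if_false]
    have h4 : ((k+1:ℕ):ℚ) * coeff (k+1) (v^(k+1+1) * derivative ℚ y) = 0 := by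
      rw [this]; push_cast; ring
    exact (mul_eq_zero.1 h4).resolve_left h3

open PowerSeries in
lemma aux_res2 (y v : PowerSeries ℚ) (hy : constantCoeff y = 0) (h : y * v = X) (N j : ℕ) :
    coeff N (v^(N+1) * derivative ℚ y * y^j) = if j = N then 1 else 0 := by
  rcases le_or_gt j N with hj | hj
  · obtain ⟨k, rfl⟩ := Nat.exists_eq_add_of_le hj
    have e : v^(j+k+1) * derivative ℚ y * y^j = X^j * (v^(k+1) * derivative ℚ y) := by
      rw [← h]; ring
    rw [e, add_comm j k, coeff_X_pow_mul, aux_res y v hy h]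
    simp
  · rw [if_neg (by omega)]
    have hX : X ∣ y := X_dvd_iff.2 hy
    have : X^(N+1) ∣ v^(N+1) * derivative ℚ y * y^j :=
      Dvd.dvd.mul_left ((pow_dvd_pow_of_dvd hX (N+1)).trans (pow_dvd_pow y hj)) _
    exact X_pow_dvd_iff.1 this N (by omega)

open Polynomial in
lemma aux_poly (N : ℕ) : ∃ Q : ℚ[X],
    (∑ m ∈ Finset.range (N+1), (((N+m).choose N : ℕ) : ℚ[X]) * X^m) * (1 - X)^(N+1)
      = 1 + X^(N+1) * Q := by
  set T : ℚ[X] := PowerSeries.trunc (N+1) (PowerSeries.mk fun n => ((Nat.choose (N + n) N : ℕ) : ℚ)) with hT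
  have hTe : T = ∑ m ∈ Finset.range (N+1), (((N+m).choose N : ℕ) : ℚ[X]) * X^m := by
    ext d
    rw [hT, PowerSeries.coeff_trunc]
    simp only [finsetSum_coeff, coeff_natCast_mul, coeff_X_pow, PowerSeries.coeff_mk]
    simp
  rw [← hTe]
  have : X^(N+1) ∣ T * (1 - X)^(N+1) - 1 := by
    rw [X_pow_dvd_iff]
    intro d hd
    have h1 := PowerSeries.mk_add_choose_mul_one_sub_pow_eq_one ℚ N
    have h2 := congrArg (PowerSeries.coeff d) h1
    have h3 : (((1 - X : ℚ[X])^(N+1) : ℚ[X]) : PowerSeries ℚ) = (1 - PowerSeries.X)^(N+1) := by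
      simp
    have h4 : PowerSeries.coeff d ((T : PowerSeries ℚ) * ((1 - PowerSeries.X)^(N+1))) =
       PowerSeries.coeff d (1 : PowerSeries ℚ) := by
      rw [← h2, PowerSeries.coeff_mul, PowerSeries.coeff_mul]
      refine Finset.sum_congr rfl fun p hp => ?_
      rw [Finset.HasAntidiagonal.mem_antidiagonal] at hp
      rw [hT, PowerSeries.coeff_coe_trunc_of_lt (by omega)]
    rw [← h3, ← Polynomial.coe_mul, Polynomial.coeff_coe, ← Polynomial.coe_one, Polynomial.coeff_coe] at h4
    rw [coeff_sub, h4, sub_self]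
  obtain ⟨Q, hQ⟩ := this
  exact ⟨Q, by rw [← hQ]; ring⟩

open PowerSeries in
lemma aux_main (y : PowerSeries ℚ) (hy : constantCoeff y = 0) (h : y * (1 - (2 * y - y^3)) = X) (N : ℕ) :
    coeff N (derivative ℚ y) = ∑ m ∈ Finset.range (N+1), ∑ i ∈ Finset.range (m+1),
      (((N+m).choose N : ℕ) : ℚ) * (((-1)^i * 2^(m-i) * (m.choose i : ℕ)) * if m + 2 * i = N then 1 else 0) := by
  obtain ⟨Q, hQ⟩ := aux_poly N
  have h1 := congrArg (Polynomial.aeval (2 * y - y^3)) hQ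
  simp only [map_mul, map_sum, map_pow, map_sub, map_add, map_one, Polynomial.aeval_X, map_natCast] at h1
  set q := Polynomial.aeval (2 * y - y^3) Q
  set v := 1 - (2 * y - y^3) with hv
  have h2 : derivative ℚ y = (∑ m ∈ Finset.range (N+1), ∑ i ∈ Finset.range (m+1),
      C ((((N+m).choose N : ℕ) : ℚ) * ((-1)^i * 2^(m-i) * (m.choose i : ℕ))) * (v^(N+1) * derivative ℚ y * y^(m+2*i)))
       - y^(N+1) * ((2 - y^2)^(N+1) * q * derivative ℚ y) := by
    have e : ∀ m, (2 * y - y^3)^m = ∑ i ∈ Finset.range (m+1), C ((-1)^i * 2^(m-i) * (m.choose i : ℕ) : ℚ) * y^(m+2*i) := by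
      intro m
      rw [show 2 * y - y^3 = y * (-y^2 + 2) by ring, mul_pow, add_pow, Finset.mul_sum]
      refine Finset.sum_congr rfl fun i _ => ?_
      simp only [map_mul, map_pow, map_neg, map_one, map_natCast, map_ofNat]
      rw [neg_pow]
      ring
    have e2 : (∑ m ∈ Finset.range (N+1), ∑ i ∈ Finset.range (m+1),
      C ((((N+m).choose N : ℕ) : ℚ) * ((-1)^i * 2^(m-i) * (m.choose i : ℕ))) * (v^(N+1) * derivative ℚ y * y^(m+2*i)))
       = (∑ m ∈ Finset.range (N+1), (((N+m).choose N : ℕ) : PowerSeries ℚ) * (2 * y - y^3)^m) * v^(N+1) * derivative ℚ y := by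
      rw [Finset.sum_mul, Finset.sum_mul]
      refine Finset.sum_congr rfl fun m _ => ?_
      rw [e, Finset.mul_sum, Finset.sum_mul, Finset.sum_mul]
      refine Finset.sum_congr rfl fun i _ => ?_
      rw [map_mul, map_natCast]
      ring
    rw [e2, h1, show 2 * y - y^3 = y * (2 - y^2) by ring, mul_pow]
    ring
  have h3 : coeff N (y^(N+1) * ((2 - y^2)^(N+1) * q * derivative ℚ y)) = 0 := by
    have hX : X ∣ y := X_dvd_iff.2 hy
    exact X_pow_dvd_iff.1 ((pow_dvd_pow_of_dvd hX (N+1)).mul_right _) N (by omega)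
  rw [h2, map_sub, h3, sub_zero, map_sum]
  refine Finset.sum_congr rfl fun m _ => ?_
  rw [map_sum]
  refine Finset.sum_congr rfl fun i _ => ?_
  rw [coeff_C_mul, aux_res2 y v hy h, mul_assoc]

lemma aux_sum (N : ℕ) : (∑ m ∈ Finset.range (N+1), ∑ i ∈ Finset.range (m+1),
      (((N+m).choose N : ℕ) : ℚ) * (((-1)^i * 2^(m-i) * (m.choose i : ℕ)) * if m + 2 * i = N then 1 else 0))
    = ∑ i ∈ Finset.range (N / 3 + 1),
          ((Nat.factorial (2 * (N - i)) : ℚ) /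
              ((Nat.factorial N : ℚ) * (Nat.factorial (N - 3 * i) : ℚ) *
                (Nat.factorial i : ℚ))) *
            (-1 : ℚ) ^ i * (2 : ℚ) ^ (N - 3 * i) := by
  have e1 : ∀ m ∈ Finset.range (N+1), (∑ i ∈ Finset.range (m+1),
      (((N+m).choose N : ℕ) : ℚ) * (((-1)^i * 2^(m-i) * (m.choose i : ℕ)) * if m + 2 * i = N then 1 else 0))
      = ∑ i ∈ Finset.range (N+1),
      (((N+m).choose N : ℕ) : ℚ) * (((-1)^i * 2^(m-i) * (m.choose i : ℕ)) * if m + 2 * i = N then 1 else 0) := by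
    intro m hm
    rw [Finset.mem_range] at hm
    refine Finset.sum_subset (Finset.range_mono (by omega)) fun i _ hi => ?_
    rw [Finset.mem_range] at hi
    rw [Nat.choose_eq_zero_of_lt (show m < i by omega)]
    simp
  rw [Finset.sum_congr rfl e1, Finset.sum_comm]
  symm
  apply Finset.sum_subset_zero_on_sdiff (Finset.range_mono (by omega))
  · intro i hi
    simp only [Finset.mem_sdiff, Finset.mem_range] at hi
    refine Finset.sum_eq_zero fun m _ => ?_
    split_ifs with hh
    · rw [Nat.choose_eq_zero_of_lt (show m < i by omega)]
      simp
    · simp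
  · intro i hi
    rw [Finset.mem_range] at hi
    obtain ⟨k, rfl⟩ := Nat.exists_eq_add_of_le (show 3 * i ≤ N by omega)
    rw [Finset.sum_eq_single (i + k)]
    · rw [if_pos (by ring), Nat.cast_add_choose, Nat.cast_add_choose,
        show 2 * (3 * i + k - i) = 3 * i + k + (i + k) by omega,
        Nat.add_sub_cancel_left, Nat.add_sub_cancel_left]
      have := Nat.factorial_ne_zero (i+k)
      have := Nat.factorial_ne_zero (3*i+k)
      have := Nat.factorial_ne_zero i
      have := Nat.factorial_ne_zero k
      field_simp
    · intro m _ hm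
      rw [if_neg (by omega)]; simp
    · intro h
      exact absurd (Finset.mem_range.2 (by omega)) h

/-- For all `n ≥ 1`,
`C_{2,2}(n) = (1/n) ⬝ ∑_{i=0}^{⌊(n-1)/3⌋} multinomial(2(n-1-i); n-1, n-1-3i, i) (-1)^i 2^{n-1-3i}`,
where `C_{2,2}(n)` is the coefficient of `x^n` in the unique power series `y` with zero constant
term satisfying `∑_{k=0}^{2} (-1)^k C(2,k) y^{2^k} = x`, and
`multinomial(m; a,b,c) = m!/(a! b! c!)` for `m = a + b + c`. -/
theorem statement_2
    (y : PowerSeries ℚ)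
    (h0 : PowerSeries.constantCoeff y = 0)
    (heq : ∑ k ∈ Finset.range (2 + 1),
        (-1 : PowerSeries ℚ) ^ k * (Nat.choose 2 k : PowerSeries ℚ) * y ^ 2 ^ k
        = PowerSeries.X)
    (n : ℕ) (hn : 1 ≤ n) :
    PowerSeries.coeff n y =
      (1 / (n : ℚ)) *
        ∑ i ∈ Finset.range ((n - 1) / 3 + 1),
          ((Nat.factorial (2 * (n - 1 - i)) : ℚ) /
              ((Nat.factorial (n - 1) : ℚ) * (Nat.factorial (n - 1 - 3 * i) : ℚ) *
                (Nat.factorial i : ℚ))) *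
            (-1 : ℚ) ^ i * (2 : ℚ) ^ (n - 1 - 3 * i) := by
  obtain ⟨N, rfl⟩ := Nat.exists_eq_add_of_le' hn
  have h : y * (1 - (2 * y - y^3)) = PowerSeries.X := by
    rw [← heq]
    simp [Finset.sum_range_succ]
    ring
  have h1 := aux_main y h0 h N
  rw [aux_sum, PowerSeries.coeff_derivative] at h1
  rw [Nat.add_sub_cancel, ← h1]
  push_cast
  have : (N : ℚ) + 1 ≠ 0 := by positivity
  field_simp
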